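/- Let N > 0, let L ≥ 2 be an integer, and let ε > 0. Then there exists n₀ such that for every n ≥ n₀ there exist T > 0 and a finite set C₀ ⊆ [0, T)^n such that the periodic set C := { c + T·v : c ∈ C₀, v ∈ ℤⁿ } satisfies: (i) every set of L pairwise distinct points of C has average squared radius strictly greater than nN (in particular, C is an (N, L−1)-multiple packing); and (ii) the normalized logarithmic density satisfies (1/n)·ln( |C₀| / Tⁿ ) ≥ (1/2)·ln( (L−1)/(2πeNL) ) − (ln L)/(2(L−1)) − ε. -/

import Mathlib

/-!
Draw `M` independent uniform points in the cube `[0, a)ⁿ`. A Chernoff bound controls the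
probability that `L` of them have average squared radius `S` at most `nN`: by the parallel-axis
identity `∑ ‖xᵢ - y‖² = L (S + ‖y - x̄‖²)`, the factor `exp (-bLS)` is, up to a constant, the
integral over `y` of `∏ exp (-b ‖xᵢ - y‖²)`, so its expectation factorises and is bounded by
Gaussian integrals. With `M` of order `(a exp (packingRate L N))ⁿ` the expected number of bad
`L`-tuples is at most a fixed fraction of `M`, and deleting one point of each leaves a good code
of size at least a constant multiple of `M`.

Repeating the code with period `a + r`, where `r² = 2LnN`, keeps all `L`-tuples good: a tuple with
`S ≤ nN` has diameter at most `r`, hence lies in a single translate of the cube. The guard gap `r`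
costs no rate because, for each fixed `n`, `a` can be taken arbitrarily large.
-/

open MeasureTheory ProbabilityTheory Set
open scoped ENNReal Finset NNReal

section AverageSquaredRadius

variable {ι E : Type*} [Fintype ι] [NormedAddCommGroup E] [InnerProductSpace ℝ E]

/-- The centroid `(1/|ι|) ∑ i, x i` of a finite family of points; it is `0` for the empty family. -/
noncomputable def centroid (x : ι → E) : E := (Fintype.card ι : ℝ)⁻¹ • ∑ i, x i

/-- The average squared radius of a finite family of points: the mean squared distance to its
centroid. -/
noncomputable def avgSqRadius (x : ι → E) : ℝ :=
  (Fintype.card ι : ℝ)⁻¹ * ∑ i, ‖x i - centroid x‖ ^ 2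

theorem card_smul_centroid (x : ι → E) : (Fintype.card ι : ℝ) • centroid x = ∑ i, x i := by
  cases isEmpty_or_nonempty ι <;> simp [centroid]

theorem sum_sub_centroid (x : ι → E) : ∑ i, (x i - centroid x) = 0 := by
  rw [Finset.sum_sub_distrib, Finset.sum_const, Finset.card_univ, ← Nat.cast_smul_eq_nsmul ℝ,
    card_smul_centroid, sub_self]

theorem centroid_add_const [Nonempty ι] (x : ι → E) (w : E) :
    centroid (fun i => x i + w) = centroid x + w := by
  simp [centroid, Finset.sum_add_distrib, ← Nat.cast_smul_eq_nsmul ℝ]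

theorem avgSqRadius_add_const (x : ι → E) (w : E) :
    avgSqRadius (fun i => x i + w) = avgSqRadius x := by
  cases isEmpty_or_nonempty ι <;> simp [avgSqRadius, centroid_add_const]

theorem continuous_avgSqRadius : Continuous (avgSqRadius : (ι → E) → ℝ) := by
  unfold avgSqRadius centroid
  fun_prop

theorem avgSqRadius_nonneg (x : ι → E) : 0 ≤ avgSqRadius x := by
  unfold avgSqRadius
  positivity

theorem card_mul_avgSqRadius (x : ι → E) :
    Fintype.card ι * avgSqRadius x = ∑ i, ‖x i - centroid x‖ ^ 2 := by
  cases isEmpty_or_nonempty ι <;> simp [avgSqRadius]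

theorem sum_norm_sub_sq (x : ι → E) (y : E) :
    ∑ i, ‖x i - y‖ ^ 2 = Fintype.card ι * (avgSqRadius x + ‖y - centroid x‖ ^ 2) := by
  calc ∑ i, ‖x i - y‖ ^ 2
      = ∑ i, (‖x i - centroid x‖ ^ 2 - 2 * inner ℝ (x i - centroid x) (y - centroid x)
          + ‖y - centroid x‖ ^ 2) := by
        simp only [← norm_sub_sq_real, sub_sub_sub_cancel_right]
    _ = Fintype.card ι * (avgSqRadius x + ‖y - centroid x‖ ^ 2) := by
        rw [Finset.sum_add_distrib, Finset.sum_sub_distrib, ← Finset.mul_sum, ← sum_inner,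
          sum_sub_centroid, ← card_mul_avgSqRadius]
        simp [mul_add]

theorem avgSqRadius_le_sq {x : ι → E} {y : E} {r : ℝ} (h : ∀ i, ‖x i - y‖ ≤ r) :
    avgSqRadius x ≤ r ^ 2 := by
  rcases isEmpty_or_nonempty ι with _ | _
  · simpa [avgSqRadius] using sq_nonneg r
  have h_sum : Fintype.card ι * (avgSqRadius x + ‖y - centroid x‖ ^ 2)
      ≤ Fintype.card ι * r ^ 2 := by
    rw [← sum_norm_sub_sq, ← nsmul_eq_mul]
    exact Finset.sum_le_card_nsmul _ _ _ fun i _ => by gcongr; exact h i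
  exact le_of_add_le_of_nonneg_left (le_of_mul_le_mul_left h_sum (by positivity)) (by positivity)

theorem norm_sub_sq_le_avgSqRadius (x : ι → E) (i j : ι) :
    ‖x i - x j‖ ^ 2 ≤ 2 * (Fintype.card ι * avgSqRadius x) := by
  classical
  rcases eq_or_ne i j with rfl | hij
  · simpa using mul_nonneg (Nat.cast_nonneg _) (avgSqRadius_nonneg x)
  have h_pair : ‖x i - centroid x‖ ^ 2 + ‖x j - centroid x‖ ^ 2
      ≤ Fintype.card ι * avgSqRadius x := by
    rw [card_mul_avgSqRadius, ← Finset.sum_pair (f := fun i => ‖x i - centroid x‖ ^ 2) hij]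
    exact Finset.sum_le_univ_sum_of_nonneg fun _ => by positivity
  calc ‖x i - x j‖ ^ 2
      ≤ (‖x i - centroid x‖ + ‖x j - centroid x‖) ^ 2 := by
        rw [← sub_sub_sub_cancel_right (x i) (x j) (centroid x)]
        gcongr
        exact norm_sub_le _ _
    _ ≤ 2 * (‖x i - centroid x‖ ^ 2 + ‖x j - centroid x‖ ^ 2) := add_sq_le
    _ ≤ 2 * (Fintype.card ι * avgSqRadius x) := by gcongr

end AverageSquaredRadius

section MultiplePacking

/-- `C` is a multiple packing of radius `r` and multiplicity `m`: every point lies in at most `m`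
of the closed balls of radius `r` centred at points of `C`. An `(N, L - 1)`-multiple packing in
`ℝⁿ` is the case `r = √(n * N)`, `m = L - 1`. -/
def IsMultiplePacking {X : Type*} [PseudoMetricSpace X] (C : Set X) (r : ℝ) (m : ℕ∞) : Prop :=
  ∀ y, {p | p ∈ C ∧ y ∈ Metric.closedBall p r}.encard ≤ m

theorem exists_injective_forall_mem {ι X : Type*} [Fintype ι] {s : Set X}
    (h : (Fintype.card ι : ℕ∞) ≤ s.encard) :
    ∃ x : ι → X, Function.Injective x ∧ ∀ i, x i ∈ s := by
  obtain ⟨f⟩ : Nonempty (ι ↪ s) := by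
    rw [← Cardinal.lift_mk_le', Cardinal.mk_fintype, Cardinal.lift_natCast,
      Cardinal.nat_le_lift_iff, ← Cardinal.natCast_le_toENat]
    exact h
  exact ⟨fun i => f i, Subtype.val_injective.comp f.injective, fun i => (f i).2⟩

theorem isMultiplePacking_of_lt_avgSqRadius {ι E : Type*} [Fintype ι] [NormedAddCommGroup E]
    [InnerProductSpace ℝ E] {C : Set E} {r : ℝ}
    (hC : ∀ x : ι → E, Function.Injective x → (∀ i, x i ∈ C) → r ^ 2 < avgSqRadius x) :
    IsMultiplePacking C r (Fintype.card ι - 1) := by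
  intro y
  by_contra! h_lt
  obtain ⟨x, hx, hxC⟩ := exists_injective_forall_mem (ι := ι)
    (le_tsub_add.trans (Order.add_one_le_of_lt h_lt))
  refine (hC x hx fun i => (hxC i).1).not_ge (avgSqRadius_le_sq (y := y) fun i => ?_)
  rw [← dist_eq_norm']
  exact (hxC i).2

end MultiplePacking

section Expurgation

variable {ι α X : Type*} [MeasurableSpace X] (μ : Measure X) [IsProbabilityMeasure μ]

theorem measurePreserving_comp_embedding [Fintype ι] [Fintype α] (σ : ι ↪ α) :
    MeasurePreserving (fun (c : α → X) i => c (σ i)) (Measure.pi fun _ => μ)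
      (Measure.pi fun _ => μ) := by
  have h_indep : iIndepFun (fun i (c : α → X) => c (σ i)) (Measure.pi fun _ => μ) :=
    (iIndepFun_pi (μ := fun _ : α => μ) (X := fun _ x => x) fun _ => aemeasurable_id).precomp
      σ.injective
  refine ⟨by fun_prop, ?_⟩
  rw [(iIndepFun_iff_map_fun_eq_pi_map fun i => (measurable_pi_apply (σ i)).aemeasurable).1 h_indep]
  congr with i : 1
  exact (measurePreserving_eval (fun _ => μ) (σ i)).map_eq

theorem ae_pi_injective [Fintype ι] [MeasurableEq X] [NullSingletonClass μ] :
    ∀ᵐ c ∂(Measure.pi fun _ : ι => μ), Function.Injective c := by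
  have h_diag : ∀ᵐ p ∂(μ.prod μ), p.1 ≠ p.2 := by
    have h_meas : MeasurableSet {p : X × X | ¬ p.1 ≠ p.2} := by
      simp only [ne_eq, not_not]
      exact measurableSet_diagonal
    refine (Measure.measure_prod_null h_meas).2 (.of_forall fun x => ?_)
    simp [preimage]
  have h_ne : ∀ i j : ι, i ≠ j → ∀ᵐ c ∂(Measure.pi fun _ : ι => μ), c i ≠ c j := by
    intro i j hij
    have h_pair := (measurePreserving_finTwoArrow μ).comp (measurePreserving_comp_embedding μ
      ⟨![i, j], by simpa [Function.Injective, Fin.forall_fin_two] using ⟨hij, hij.symm⟩⟩)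
    exact h_pair.quasiMeasurePreserving.ae h_diag
  filter_upwards [ae_all_iff.2 fun i => ae_all_iff.2 fun j => ae_all_iff.2 (h_ne i j)] with c hc
  exact fun i j => not_imp_not.1 (hc i j)

theorem lintegral_pi_prod_eq_pow [Fintype ι] {f : X → ℝ≥0∞} (hf : Measurable f) :
    ∫⁻ x : ι → X, ∏ i, f (x i) ∂(Measure.pi fun _ => μ) = (∫⁻ x, f x ∂μ) ^ Fintype.card ι := by
  rw [lintegral_prod_eq_prod_lintegral_of_indepFun Finset.univ (fun i (x : ι → X) => f (x i))
    (iIndepFun_pi (X := fun _ => f) fun _ => hf.aemeasurable)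
    (fun i => hf.comp (measurable_pi_apply i))]
  simp only [(measurePreserving_eval (fun _ : ι => μ) _).lintegral_comp hf, Finset.prod_const,
    Finset.card_univ]

open Classical in
theorem exists_sample_card_bad_le [Fintype ι] [Fintype α] [MeasurableEq X] [NullSingletonClass μ]
    {p : X → Prop} (hp : ∀ᵐ x ∂μ, p x) {bad : Set (ι → X)} (h_bad : MeasurableSet bad) :
    ∃ c : α → X, Function.Injective c ∧ (∀ k, p (c k)) ∧
      (#{σ : ι ↪ α | (fun i => c (σ i)) ∈ bad} : ℝ)
        ≤ Fintype.card α ^ Fintype.card ι * (Measure.pi fun _ => μ).real bad := by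
  let count (c : α → X) : ℝ := ∑ σ : ι ↪ α, {c | (fun i => c (σ i)) ∈ bad}.indicator 1 c
  have h_meas (σ : ι ↪ α) : MeasurableSet {c : α → X | (fun i => c (σ i)) ∈ bad} :=
    (measurePreserving_comp_embedding μ σ).measurable h_bad
  have h_int (σ : ι ↪ α) : Integrable ({c : α → X | (fun i => c (σ i)) ∈ bad}.indicator 1)
      (Measure.pi fun _ => μ) :=
    (integrable_const (1 : ℝ)).indicator (h_meas σ)
  have h_mean : ∫ c, count c ∂(Measure.pi fun _ => μ)
      = Fintype.card (ι ↪ α) * (Measure.pi fun _ => μ).real bad := by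
    rw [integral_finsetSum _ fun σ _ => h_int σ, ← nsmul_eq_mul, ← Finset.card_univ]
    refine Finset.sum_eq_card_nsmul fun σ _ => ?_
    rw [integral_indicator_one (h_meas σ)]
    exact (measurePreserving_comp_embedding μ σ).measureReal_preimage h_bad.nullMeasurableSet
  have h_good : ∀ᵐ c ∂(Measure.pi fun _ : α => μ), Function.Injective c ∧ ∀ k, p (c k) :=
    (ae_pi_injective μ).and
      (ae_all_iff.2 fun k => (measurePreserving_eval _ k).quasiMeasurePreserving.ae hp)
  obtain ⟨c, hc, h_le⟩ := exists_notMem_null_le_integral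
    (integrable_finsetSum Finset.univ fun σ _ => h_int σ) (ae_iff.1 h_good)
  obtain ⟨h_inj, h_mem⟩ := not_not.1 hc
  refine ⟨c, h_inj, h_mem, ?_⟩
  calc (#{σ : ι ↪ α | (fun i => c (σ i)) ∈ bad} : ℝ)
      = count c := by simp [count, indicator_apply]
    _ ≤ Fintype.card (ι ↪ α) * (Measure.pi fun _ => μ).real bad := h_le.trans_eq h_mean
    _ ≤ Fintype.card α ^ Fintype.card ι * (Measure.pi fun _ => μ).real bad := by
      gcongr
      exact_mod_cast Fintype.card_embedding_eq.trans_le (Nat.descFactorial_le_pow _ _)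

theorem exists_finset_hitting_embeddings [Nonempty ι] (B : Finset (ι ↪ α)) :
    ∃ D : Finset α, #D ≤ #B ∧ ∀ σ ∈ B, ∃ i, σ i ∈ D := by
  classical
  obtain ⟨i₀⟩ := ‹Nonempty ι›
  exact ⟨B.image fun σ => σ i₀, Finset.card_image_le,
    fun σ hσ => ⟨i₀, Finset.mem_image_of_mem (fun σ => σ i₀) hσ⟩⟩

theorem exists_finset_forall_injective_notMem [Fintype ι] [Nonempty ι] [MeasurableEq X]
    [NullSingletonClass μ] {s : Set X} (hs : ∀ᵐ x ∂μ, x ∈ s)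
    {bad : Set (ι → X)} (h_bad : MeasurableSet bad) (M : ℕ) :
    ∃ C : Finset X, ↑C ⊆ s ∧ (∀ x : ι → X, Function.Injective x → (∀ i, x i ∈ C) → x ∉ bad) ∧
      M - M ^ Fintype.card ι * (Measure.pi fun _ => μ).real bad ≤ (#C : ℝ) := by
  classical
  obtain ⟨c, hc, hcs, h_card⟩ := exists_sample_card_bad_le (α := Fin M) μ hs h_bad
  obtain ⟨D, hD, h_hit⟩ := exists_finset_hitting_embeddings
    {σ : ι ↪ Fin M | (fun i => c (σ i)) ∈ bad}
  refine ⟨Dᶜ.map ⟨c, hc⟩, fun y hy => ?_, fun x hx hxC h_mem => ?_, ?_⟩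
  · obtain ⟨k, -, rfl⟩ := Finset.mem_map.1 hy
    exact hcs k
  · choose τ hτ hτx using fun i => Finset.mem_map.1 (hxC i)
    obtain rfl : (fun i => c (τ i)) = x := funext hτx
    obtain ⟨i, hi⟩ := h_hit ⟨τ, hx.of_comp⟩ (by simpa using h_mem)
    exact Finset.mem_compl.1 (hτ i) hi
  · have h_compl : (#D : ℝ) + #Dᶜ = M := by
      exact_mod_cast D.card_add_card_compl.trans (Fintype.card_fin M)
    rw [Fintype.card_fin] at h_card
    have h_removed : (#D : ℝ) ≤ _ := (Nat.cast_le.2 hD).trans h_card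
    rw [Finset.card_map]
    linarith

end Expurgation

section Periodic

variable {κ : Type*}

/-- The half-open cube `[0, a)^κ` in Euclidean space. -/
def halfOpenCube (κ : Type*) (a : ℝ) : Set (EuclideanSpace ℝ κ) := {x | ∀ j, x j ∈ Ico 0 a}

/-- The periodic set `C₀ + T • ℤ^κ`. -/
def periodicSet (C₀ : Set (EuclideanSpace ℝ κ)) (T : ℝ) : Set (EuclideanSpace ℝ κ) :=
  {p | ∃ c ∈ C₀, ∃ v : κ → ℤ, ∀ j, p j = c j + T * v j}

theorem halfOpenCube_eq_preimage (a : ℝ) :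
    halfOpenCube κ a = WithLp.ofLp ⁻¹' univ.pi fun _ => Ico 0 a := by
  ext
  simp [halfOpenCube]

theorem measurableSet_halfOpenCube [Countable κ] (a : ℝ) : MeasurableSet (halfOpenCube κ a) := by
  rw [halfOpenCube_eq_preimage]
  exact (WithLp.measurable_ofLp _ _) (.univ_pi fun _ => measurableSet_Ico)

theorem halfOpenCube_mono {a b : ℝ} (hab : a ≤ b) : halfOpenCube κ a ⊆ halfOpenCube κ b :=
  fun _ hx j => Ico_subset_Ico_right hab (hx j)

variable [Fintype κ]

theorem volume_halfOpenCube (a : ℝ) :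
    volume (halfOpenCube κ a) = ENNReal.ofReal a ^ Fintype.card κ := by
  rw [halfOpenCube_eq_preimage, (PiLp.volume_preserving_ofLp κ).measure_preimage
    (MeasurableSet.univ_pi fun _ => measurableSet_Ico).nullMeasurableSet, volume_pi_pi]
  simp

/-- Distinct translates of the cube `[0, a)^κ` by `(a + r) • ℤ^κ` are more than `r` apart. -/
theorem exists_translate_of_norm_sub_le {ι : Type*} [Nonempty ι] {C₀ : Set (EuclideanSpace ℝ κ)}
    {a r : ℝ} (h_cube : C₀ ⊆ halfOpenCube κ a)
    {x : ι → EuclideanSpace ℝ κ} (hx : ∀ i, x i ∈ periodicSet C₀ (a + r))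
    (h_near : ∀ i k, ‖x i - x k‖ ≤ r) :
    ∃ (c : ι → EuclideanSpace ℝ κ) (w : EuclideanSpace ℝ κ),
      (∀ i, c i ∈ C₀) ∧ ∀ i, x i = c i + w := by
  choose c hc v hv using hx
  have h_shift_le : ∀ i k j, v i j ≤ v k j := by
    intro i k j
    by_contra! h_lt
    have h_step : (v k j : ℝ) + 1 ≤ v i j := by exact_mod_cast h_lt
    have h_coord : x i j - x k j ≤ r :=
      (le_abs_self _).trans ((PiLp.norm_apply_le (x i - x k) j).trans (h_near i k))
    rw [hv, hv] at h_coord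
    have hc_i := h_cube (hc i) j
    have hc_k := h_cube (hc k) j
    have h_period : 0 ≤ a + r :=
      add_nonneg (hc_i.1.trans hc_i.2.le) ((norm_nonneg _).trans (h_near i k))
    linarith [mul_le_mul_of_nonneg_left h_step h_period, hc_i.1, hc_k.2]
  obtain ⟨i₀⟩ := ‹Nonempty ι›
  refine ⟨c, x i₀ - c i₀, hc, fun i => ?_⟩
  ext j
  simp [hv, (h_shift_le i i₀ j).antisymm (h_shift_le i₀ i j)]

theorem lt_avgSqRadius_of_mem_periodicSet {ι : Type*} [Fintype ι]
    {C₀ : Set (EuclideanSpace ℝ κ)} {a r R : ℝ} (hr : 0 ≤ r)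
    (hrR : 2 * (Fintype.card ι * R) ≤ r ^ 2) (h_cube : C₀ ⊆ halfOpenCube κ a)
    (h_good : ∀ x : ι → EuclideanSpace ℝ κ, Function.Injective x → (∀ i, x i ∈ C₀) →
      R < avgSqRadius x)
    {x : ι → EuclideanSpace ℝ κ} (hx : Function.Injective x)
    (hx_mem : ∀ i, x i ∈ periodicSet C₀ (a + r)) : R < avgSqRadius x := by
  by_contra! h_le
  cases isEmpty_or_nonempty ι
  · exact (h_good x hx isEmptyElim).not_ge h_le
  have h_near : ∀ i k, ‖x i - x k‖ ≤ r := fun i k => by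
    refine le_of_sq_le_sq ((norm_sub_sq_le_avgSqRadius x i k).trans (le_trans ?_ hrR)) hr
    gcongr
  obtain ⟨c, w, hc, hxc⟩ := exists_translate_of_norm_sub_le h_cube hx_mem h_near
  obtain rfl : x = fun i => c i + w := funext hxc
  rw [avgSqRadius_add_const] at h_le
  exact (h_good c (fun i k hik => hx (by simp [hik])) hc).not_ge h_le

end Periodic

section GaussianKernel

variable {E : Type*} [NormedAddCommGroup E]

/-- The Gaussian kernel `exp (-b ‖x - y‖²)`, valued in `ℝ≥0∞` so that Tonelli's theorem applies. -/
noncomputable def gaussianKernel (b : ℝ) (x y : E) : ℝ≥0∞ :=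
  ENNReal.ofReal (Real.exp (-b * ‖x - y‖ ^ 2))

theorem gaussianKernel_comm (b : ℝ) (x y : E) : gaussianKernel b x y = gaussianKernel b y x := by
  rw [gaussianKernel, gaussianKernel, norm_sub_rev]

theorem measurable_gaussianKernel [MeasurableSpace E] [OpensMeasurableSpace E]
    [SecondCountableTopology E] (b : ℝ) :
    Measurable (Function.uncurry (gaussianKernel b : E → E → ℝ≥0∞)) := by
  have h_cont : Continuous fun p : E × E => Real.exp (-b * ‖p.1 - p.2‖ ^ 2) := by fun_prop
  exact h_cont.measurable.ennreal_ofReal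

variable [InnerProductSpace ℝ E]

theorem prod_gaussianKernel {ι : Type*} [Fintype ι] (b : ℝ) (x : ι → E) (y : E) :
    ∏ i, gaussianKernel b (x i) y
      = ENNReal.ofReal (Real.exp (-(b * Fintype.card ι) * avgSqRadius x))
        * gaussianKernel (b * Fintype.card ι) (centroid x) y := by
  simp only [gaussianKernel]
  rw [← ENNReal.ofReal_prod_of_nonneg fun _ _ => (Real.exp_pos _).le, ← Real.exp_sum,
    ← Finset.mul_sum, sum_norm_sub_sq, ← ENNReal.ofReal_mul (Real.exp_pos _).le, ← Real.exp_add,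
    norm_sub_rev]
  congr 2
  ring

variable [MeasurableSpace E] [BorelSpace E] [FiniteDimensional ℝ E]

theorem lintegral_gaussianKernel {b : ℝ} (hb : 0 < b) (x : E) :
    ∫⁻ y, gaussianKernel b x y
      = ENNReal.ofReal ((Real.pi / b) ^ (Module.finrank ℝ E / 2 : ℝ)) := by
  have h_gauss := GaussianFourier.integral_rexp_neg_mul_sq_norm (V := E) hb
  have h_int : Integrable fun y : E => Real.exp (-b * ‖y‖ ^ 2) :=
    .of_integral_ne_zero (by rw [h_gauss]; positivity)
  simp only [gaussianKernel_comm b x]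
  unfold gaussianKernel
  rw [lintegral_sub_right_eq_self (fun y : E => ENNReal.ofReal (Real.exp (-b * ‖y‖ ^ 2))) x,
    ← ofReal_integral_eq_lintegral_ofReal h_int (.of_forall fun _ => (Real.exp_pos _).le), h_gauss]

variable (μ : Measure E) [IsProbabilityMeasure μ] {κ : ℝ≥0}

/-- One of the `m` factors is integrated against Lebesgue measure, the others are bounded by the
density bound on `μ`. -/
theorem lintegral_lintegral_gaussianKernel_pow_le (hκ : μ ≤ κ • volume) {b : ℝ} (hb : 0 < b)
    {m : ℕ} (hm : m ≠ 0) :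
    ∫⁻ y, (∫⁻ x, gaussianKernel b x y ∂μ) ^ m
      ≤ (κ * ENNReal.ofReal ((Real.pi / b) ^ (Module.finrank ℝ E / 2 : ℝ))) ^ (m - 1)
        * ENNReal.ofReal ((Real.pi / b) ^ (Module.finrank ℝ E / 2 : ℝ)) := by
  set G := ENNReal.ofReal ((Real.pi / b) ^ (Module.finrank ℝ E / 2 : ℝ))
  have h_inner_le (y : E) : ∫⁻ x, gaussianKernel b x y ∂μ ≤ κ * G := by
    calc ∫⁻ x, gaussianKernel b x y ∂μ
        ≤ ∫⁻ x, gaussianKernel b x y ∂(κ • volume) := lintegral_mono' hκ le_rfl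
      _ = κ * G := by
        simp only [gaussianKernel_comm b _ y, lintegral_smul_measure, lintegral_gaussianKernel hb]
        rfl
  have h_total : ∫⁻ y, ∫⁻ x, gaussianKernel b x y ∂μ = G := by
    rw [lintegral_lintegral_swap (f := fun y x => gaussianKernel b x y)
      ((measurable_gaussianKernel b).comp measurable_swap).aemeasurable]
    simp [lintegral_gaussianKernel hb, G]
  calc ∫⁻ y, (∫⁻ x, gaussianKernel b x y ∂μ) ^ m
      ≤ ∫⁻ y, (κ * G) ^ (m - 1) * ∫⁻ x, gaussianKernel b x y ∂μ := by
        refine lintegral_mono fun y => ?_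
        rw [← pow_sub_one_mul hm]
        gcongr
        exact h_inner_le y
    _ = (κ * G) ^ (m - 1) * G := by
        rw [lintegral_const_mul, h_total]
        exact (measurable_gaussianKernel b).lintegral_prod_left'

variable {ι : Type*} [Fintype ι] [Nonempty ι]

theorem lintegral_exp_neg_avgSqRadius_le (hκ : μ ≤ κ • volume) {b : ℝ} (hb : 0 < b) :
    ∫⁻ x : ι → E, ENNReal.ofReal (Real.exp (-(b * Fintype.card ι) * avgSqRadius x))
        ∂(Measure.pi fun _ => μ)
      ≤ (κ * ENNReal.ofReal ((Real.pi / b) ^ (Module.finrank ℝ E / 2 : ℝ))) ^ (Fintype.card ι - 1)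
        * ENNReal.ofReal (Fintype.card ι ^ (Module.finrank ℝ E / 2 : ℝ)) := by
  set d : ℝ := Module.finrank ℝ E / 2
  set G := ENNReal.ofReal ((Real.pi / b) ^ d) with hG
  set W := ENNReal.ofReal ((Real.pi / (b * Fintype.card ι)) ^ d) with hW
  have hGW : G = ENNReal.ofReal (Fintype.card ι ^ d) * W := by
    rw [hG, hW, ← ENNReal.ofReal_mul (by positivity),
      ← Real.mul_rpow (by positivity) (by positivity)]
    congr 2
    field_simp
  have hW_ne_zero : W ≠ 0 := by
    rw [hW, ne_eq, ENNReal.ofReal_eq_zero, not_le]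
    positivity
  refine (ENNReal.mul_le_mul_iff_left hW_ne_zero ENNReal.ofReal_ne_top).1 ?_
  calc (∫⁻ x : ι → E, ENNReal.ofReal (Real.exp (-(b * Fintype.card ι) * avgSqRadius x))
        ∂(Measure.pi fun _ => μ)) * W
      = ∫⁻ x : ι → E, (∫⁻ y, ∏ i, gaussianKernel b (x i) y) ∂(Measure.pi fun _ => μ) := by
        rw [← lintegral_mul_const' _ _ ENNReal.ofReal_ne_top]
        simp only [prod_gaussianKernel, lintegral_const_mul' _ _ ENNReal.ofReal_ne_top,
          lintegral_gaussianKernel (E := E) (b := b * Fintype.card ι) (by positivity), d]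
    _ = ∫⁻ y, (∫⁻ x, gaussianKernel b x y ∂μ) ^ Fintype.card ι := by
        rw [lintegral_lintegral_swap (Finset.measurable_fun_prod _ fun i _ =>
          (measurable_gaussianKernel b).comp
            (((measurable_pi_apply i).comp measurable_fst).prodMk measurable_snd)).aemeasurable]
        simp only [lintegral_pi_prod_eq_pow μ (measurable_gaussianKernel b).of_uncurry_right]
    _ ≤ (κ * G) ^ (Fintype.card ι - 1) * G :=
        lintegral_lintegral_gaussianKernel_pow_le μ hκ hb Fintype.card_ne_zero
    _ = (κ * G) ^ (Fintype.card ι - 1) * ENNReal.ofReal (Fintype.card ι ^ d) * W := by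
        rw [mul_assoc, ← hGW]

theorem measureReal_avgSqRadius_le (hκ : μ ≤ κ • volume) {b : ℝ} (hb : 0 < b) (R : ℝ) :
    (Measure.pi fun _ : ι => μ).real {x | avgSqRadius x ≤ R}
      ≤ Real.exp (b * Fintype.card ι * R)
        * ((κ * (Real.pi / b) ^ (Module.finrank ℝ E / 2 : ℝ)) ^ (Fintype.card ι - 1)
          * Fintype.card ι ^ (Module.finrank ℝ E / 2 : ℝ)) := by
  have h_cont : Continuous fun x : ι → E => Real.exp (-(b * Fintype.card ι) * avgSqRadius x) :=
    Real.continuous_exp.comp (continuous_const.mul continuous_avgSqRadius)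
  have h_int : Integrable (fun x : ι → E => Real.exp (-(b * Fintype.card ι) * avgSqRadius x))
      (Measure.pi fun _ => μ) := by
    refine .of_bound h_cont.aestronglyMeasurable 1 (.of_forall fun x => ?_)
    rw [Real.norm_of_nonneg (Real.exp_pos _).le, Real.exp_le_one_iff]
    exact mul_nonpos_of_nonpos_of_nonneg (neg_nonpos.2 (by positivity)) (avgSqRadius_nonneg x)
  have h_mgf : mgf avgSqRadius (Measure.pi fun _ : ι => μ) (-(b * Fintype.card ι))
      ≤ (κ * (Real.pi / b) ^ (Module.finrank ℝ E / 2 : ℝ)) ^ (Fintype.card ι - 1)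
        * Fintype.card ι ^ (Module.finrank ℝ E / 2 : ℝ) := by
    rw [mgf, ← ENNReal.ofReal_le_ofReal_iff (by positivity),
      ofReal_integral_eq_lintegral_ofReal h_int (.of_forall fun _ => (Real.exp_pos _).le),
      ENNReal.ofReal_mul (by positivity), ENNReal.ofReal_pow (by positivity),
      ENNReal.ofReal_mul κ.coe_nonneg, ENNReal.ofReal_coe_nnreal]
    exact lintegral_exp_neg_avgSqRadius_le μ hκ hb
  calc (Measure.pi fun _ : ι => μ).real {x | avgSqRadius x ≤ R}
      ≤ Real.exp (-(-(b * Fintype.card ι)) * R)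
          * mgf avgSqRadius (Measure.pi fun _ : ι => μ) (-(b * Fintype.card ι)) :=
        measure_le_le_exp_mul_mgf R (neg_nonpos.2 (by positivity)) h_int
    _ ≤ _ := by
        rw [neg_neg]
        gcongr

end GaussianKernel

section CubeCodes

theorem cond_le_inv_smul {Ω : Type*} [MeasurableSpace Ω] (μ : Measure Ω) (s : Set Ω) :
    μ[|s] ≤ (μ s)⁻¹ • μ :=
  Measure.le_iff.2 fun t _ => by
    rw [ProbabilityTheory.cond, Measure.smul_apply, Measure.smul_apply]
    gcongr
    exact Measure.restrict_le_self

theorem cond_halfOpenCube_le {κ : Type*} [Fintype κ] {a : ℝ} (ha : 0 < a) :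
    (volume : Measure (EuclideanSpace ℝ κ))[|halfOpenCube κ a]
      ≤ (a ^ Fintype.card κ).toNNReal⁻¹ • volume := by
  refine (cond_le_inv_smul volume (halfOpenCube κ a)).trans_eq ?_
  rw [volume_halfOpenCube, ← ENNReal.ofReal_pow ha.le, ENNReal.ofReal,
    ← ENNReal.coe_inv (by positivity)]
  rfl

theorem exists_finset_halfOpenCube {ι κ : Type*} [Fintype ι] [Nonempty ι] [Fintype κ] [Nonempty κ]
    {a b : ℝ} (ha : 0 < a) (hb : 0 < b) (R : ℝ) (M : ℕ) :
    ∃ C : Finset (EuclideanSpace ℝ κ), ↑C ⊆ halfOpenCube κ a ∧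
      (∀ x : ι → EuclideanSpace ℝ κ, Function.Injective x → (∀ i, x i ∈ C) → R < avgSqRadius x) ∧
      M - M ^ Fintype.card ι * (Real.exp (b * Fintype.card ι * R)
        * (((a ^ Fintype.card κ)⁻¹ * (Real.pi / b) ^ (Fintype.card κ / 2 : ℝ))
            ^ (Fintype.card ι - 1) * Fintype.card ι ^ (Fintype.card κ / 2 : ℝ))) ≤ (#C : ℝ) := by
  let μ : Measure (EuclideanSpace ℝ κ) := volume[|halfOpenCube κ a]
  have : IsProbabilityMeasure μ := cond_isProbabilityMeasure_of_finite
    (by simp [volume_halfOpenCube, ha]) (by simp [volume_halfOpenCube])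
  have : NullSingletonClass μ := ⟨fun x => cond_absolutelyContinuous (measure_singleton x)⟩
  have h_prob := measureReal_avgSqRadius_le (ι := ι) μ (cond_halfOpenCube_le ha) hb R
  rw [NNReal.coe_inv, Real.coe_toNNReal _ (by positivity), finrank_euclideanSpace] at h_prob
  obtain ⟨C, hC, h_good, h_card⟩ := exists_finset_forall_injective_notMem (ι := ι) μ
    (ae_cond_mem (measurableSet_halfOpenCube a)) (bad := {x | avgSqRadius x ≤ R})
    (continuous_avgSqRadius.measurable measurableSet_Iic) M
  refine ⟨C, hC, fun x hx hxC => not_le.1 (h_good x hx hxC), le_trans ?_ h_card⟩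
  gcongr

/-- The exponential rate `½ ln ((L - 1) / (2πeNL)) - ln L / (2(L - 1))` of the density of random
codes whose `L`-tuples have average squared radius more than `N` per dimension. -/
noncomputable def packingRate (L : ℕ) (N : ℝ) : ℝ :=
  1 / 2 * Real.log ((L - 1) / (2 * Real.pi * Real.exp 1 * N * L)) - Real.log L / (2 * (L - 1))

/-- The choice `b = (L - 1) / (2NL)` minimises the Chernoff bound for `avgSqRadius ≤ n * N`. -/
theorem chernoff_bound_eq_exp_packingRate {L n : ℕ} (hL : 2 ≤ L) {N b : ℝ} (hN : 0 < N)
    (hb : b = (L - 1) / (2 * N * L)) (V : ℝ) :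
    Real.exp (b * L * (n * N)) * ((V⁻¹ * (Real.pi / b) ^ (n / 2 : ℝ)) ^ (L - 1)
        * (L : ℝ) ^ (n / 2 : ℝ))
      = (V * Real.exp (packingRate L N) ^ n)⁻¹ ^ (L - 1) := by
  have hL' : (1 : ℝ) < L := by exact_mod_cast hL
  have h_sub : (0 : ℝ) < L - 1 := sub_pos.2 hL'
  have hb_pos : 0 < b := by rw [hb]; positivity
  have h_log : Real.log ((L - 1) / (2 * Real.pi * Real.exp 1 * N * L))
      = -(1 + Real.log (Real.pi / b)) := by
    rw [← Real.log_exp 1, ← Real.log_mul (by positivity) (by positivity), ← Real.log_inv,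
      Real.log_exp, hb]
    congr 1
    field_simp
  have h_exponent : b * L * (n * N) + (Real.log (Real.pi / b) * (n / 2) * (L - 1)
      + Real.log L * (n / 2)) = -(n * packingRate L N) * (L - 1) := by
    rw [packingRate, h_log, hb]
    field_simp
    ring
  rw [mul_inv, mul_pow, mul_pow, Real.rpow_def_of_pos (by positivity),
    Real.rpow_def_of_pos (by positivity), ← Real.exp_nat_mul, ← Real.exp_nat_mul, ← Real.exp_neg,
    ← Real.exp_nat_mul, Nat.cast_pred (by lia), mul_comm ((L : ℝ) - 1), mul_comm ((L : ℝ) - 1),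
    ← h_exponent, Real.exp_add, Real.exp_add]
  ring

theorem exists_nat_div_eight_le_sub {L : ℕ} (hL : 2 ≤ L) {z : ℝ} (hz : 2 ≤ z) :
    ∃ M : ℕ, z / 8 ≤ M - M ^ L * z⁻¹ ^ (L - 1) := by
  have h_floor_le : (⌊z / 2⌋₊ : ℝ) ≤ z / 2 := Nat.floor_le (by positivity)
  have h_le_floor : z / 4 ≤ ⌊z / 2⌋₊ := by
    have h_one : (1 : ℝ) ≤ ⌊z / 2⌋₊ := by
      exact_mod_cast Nat.le_floor (by norm_num; linarith)
    linarith [Nat.lt_floor_add_one (z / 2)]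
  refine ⟨⌊z / 2⌋₊, ?_⟩
  set M : ℝ := (⌊z / 2⌋₊ : ℝ)
  have h_half : M * z⁻¹ ≤ 1 / 2 := by
    rw [← div_eq_mul_inv, div_le_iff₀ (by positivity)]
    linarith
  have h_pow : (M * z⁻¹) ^ (L - 1) ≤ 1 / 2 :=
    (pow_le_of_le_one (by positivity) (by linarith) (by lia)).trans h_half
  calc z / 8 ≤ M - M * (1 / 2) := by linarith
    _ ≤ M - M * (M * z⁻¹) ^ (L - 1) := by gcongr
    _ = M - M ^ L * z⁻¹ ^ (L - 1) := by
      rw [mul_pow, ← mul_assoc, mul_pow_sub_one (by lia)]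

theorem exists_finset_halfOpenCube_packingRate {L n : ℕ} (hL : 2 ≤ L) (hn : n ≠ 0) {N a : ℝ}
    (hN : 0 < N) (ha : 0 < a) (h_large : 2 ≤ (a * Real.exp (packingRate L N)) ^ n) :
    ∃ C : Finset (EuclideanSpace ℝ (Fin n)), ↑C ⊆ halfOpenCube (Fin n) a ∧
      (∀ x : Fin L → EuclideanSpace ℝ (Fin n), Function.Injective x → (∀ i, x i ∈ C) →
        n * N < avgSqRadius x) ∧
      (a * Real.exp (packingRate L N)) ^ n / 8 ≤ (#C : ℝ) := by
  have : NeZero n := ⟨hn⟩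
  have : NeZero L := ⟨by lia⟩
  have hL' : (0 : ℝ) < L - 1 := sub_pos.2 (by exact_mod_cast hL)
  obtain ⟨M, hM⟩ := exists_nat_div_eight_le_sub hL h_large
  obtain ⟨C, hC, h_good, h_card⟩ := exists_finset_halfOpenCube (ι := Fin L) (κ := Fin n) ha
    (b := (L - 1) / (2 * N * L)) (by positivity) (n * N) M
  simp only [Fintype.card_fin] at h_card
  rw [chernoff_bound_eq_exp_packingRate hL hN rfl, ← mul_pow] at h_card
  exact ⟨C, hC, h_good, hM.trans h_card⟩

theorem sub_le_inv_mul_log_div_pow {n : ℕ} (hn : n ≠ 0) {a r q ε c : ℝ} (ha : 0 < a) (hr : 0 ≤ r)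
    (hra : r / a ≤ ε / 2) (hn_large : Real.log 8 ≤ n * (ε / 2))
    (hc : (a * Real.exp q) ^ n / 8 ≤ c) :
    q - ε ≤ (n : ℝ)⁻¹ * Real.log (c / (a + r) ^ n) := by
  have h_guard : Real.log ((a + r) / a) ≤ ε / 2 := by
    refine (Real.log_le_sub_one_of_pos (by positivity)).trans ?_
    rwa [add_div, div_self ha.ne', add_sub_cancel_left]
  have h_log : Real.log (((a * Real.exp q) ^ n / 8) / (a + r) ^ n)
      = n * (q - Real.log ((a + r) / a)) - Real.log 8 := by
    rw [Real.log_div (by positivity) (by positivity), Real.log_div (by positivity) (by norm_num),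
      Real.log_div (by positivity) ha.ne', Real.log_pow, Real.log_pow,
      Real.log_mul ha.ne' (Real.exp_pos q).ne', Real.log_exp]
    ring
  rw [le_inv_mul_iff₀ (by positivity)]
  calc n * (q - ε) ≤ n * (q - Real.log ((a + r) / a)) - Real.log 8 := by
        nlinarith [mul_le_mul_of_nonneg_left h_guard n.cast_nonneg]
    _ = Real.log (((a * Real.exp q) ^ n / 8) / (a + r) ^ n) := h_log.symm
    _ ≤ Real.log (c / (a + r) ^ n) := by gcongr

theorem exists_cube_side {n : ℕ} (hn : n ≠ 0) {k : ℝ} (hk : 0 < k) (r : ℝ) {δ : ℝ} (hδ : 0 < δ) :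
    ∃ a : ℝ, 0 < a ∧ 2 ≤ (a * k) ^ n ∧ r / a ≤ δ := by
  have h_pow : Filter.Tendsto (fun a : ℝ => (a * k) ^ n) Filter.atTop Filter.atTop :=
    (Filter.tendsto_pow_atTop hn).comp (Filter.tendsto_id.atTop_mul_const hk)
  exact ((Filter.eventually_gt_atTop 0).and ((h_pow.eventually_ge_atTop 2).and
    ((tendsto_const_nhds.div_atTop Filter.tendsto_id).eventually_le_const hδ))).exists

end CubeCodes

/-- For `N > 0`, `L ≥ 2` and `ε > 0`, for all sufficiently large `n` there
exist `T > 0` and a finite `C₀ ⊆ [0, T)^n` such that the periodic set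
`C = C₀ + T·ℤⁿ` satisfies: (i) every `L` pairwise distinct points of `C` have average
squared radius greater than `nN` (in particular, `C` is an `(N, L-1)`-multiple packing);
and (ii) `(1/n) ln(|C₀| / Tⁿ) ≥ (1/2) ln((L-1)/(2πeNL)) - (ln L)/(2(L-1)) - ε`. -/
theorem infinite_constellation_good_density (L : ℕ) (hL : 2 ≤ L) (N ε : ℝ)
    (hN : 0 < N) (hε : 0 < ε) :
    ∃ n₀ : ℕ, ∀ n : ℕ, n₀ ≤ n →
      ∃ T : ℝ, 0 < T ∧
        ∃ C₀ : Finset (EuclideanSpace ℝ (Fin n)),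
          (∀ c ∈ C₀, ∀ j, c j ∈ Set.Ico (0 : ℝ) T) ∧
          (∀ x : Fin L → EuclideanSpace ℝ (Fin n), Function.Injective x →
            (∀ i, ∃ c ∈ C₀, ∃ v : Fin n → ℤ, ∀ j, x i j = c j + T * (v j : ℝ)) →
            (n : ℝ) * N < (L : ℝ)⁻¹ * ∑ i, ‖x i - (L : ℝ)⁻¹ • ∑ i, x i‖ ^ 2) ∧
          (∀ y : EuclideanSpace ℝ (Fin n),
            {p : EuclideanSpace ℝ (Fin n) |
                (∃ c ∈ C₀, ∃ v : Fin n → ℤ, ∀ j, p j = c j + T * (v j : ℝ)) ∧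
                y ∈ Metric.closedBall p (Real.sqrt (n * N))}.encard ≤ (L : ℕ∞) - 1) ∧
          (1 / 2 : ℝ) * Real.log (((L : ℝ) - 1) / (2 * Real.pi * Real.exp 1 * N * L))
              - Real.log L / (2 * ((L : ℝ) - 1)) - ε
            ≤ (n : ℝ)⁻¹ * Real.log ((C₀.card : ℝ) / T ^ n) := by
  obtain ⟨n₀, hn₀⟩ := exists_nat_ge (Real.log 8 / (ε / 2))
  refine ⟨n₀ + 1, fun n hn => ?_⟩
  have hn_ne_zero : n ≠ 0 := by lia
  have hn_large : Real.log 8 ≤ n * (ε / 2) :=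
    (div_le_iff₀ (half_pos hε)).1 (hn₀.trans (by exact_mod_cast n₀.le_succ.trans hn))
  have hr_sq : √(2 * (L * (n * N))) ^ 2 = 2 * (L * (n * N)) := Real.sq_sqrt (by positivity)
  set r := √(2 * (L * (n * N)))
  have hr : 0 ≤ r := Real.sqrt_nonneg _
  obtain ⟨a, ha, ha_large, har⟩ :=
    exists_cube_side hn_ne_zero (Real.exp_pos (packingRate L N)) r (half_pos hε)
  obtain ⟨C₀, h_cube, h_good, h_card⟩ :=
    exists_finset_halfOpenCube_packingRate hL hn_ne_zero hN ha ha_large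
  have h_radius (x : Fin L → EuclideanSpace ℝ (Fin n)) (hx : Function.Injective x)
      (hx_mem : ∀ i, x i ∈ periodicSet C₀ (a + r)) : n * N < avgSqRadius x :=
    lt_avgSqRadius_of_mem_periodicSet hr (by simp [hr_sq]) h_cube h_good hx hx_mem
  have h_packing : IsMultiplePacking (periodicSet (κ := Fin n) C₀ (a + r)) √(n * N) (L - 1) := by
    simpa using isMultiplePacking_of_lt_avgSqRadius (ι := Fin L) fun x hx hx_mem =>
      (Real.sq_sqrt (by positivity)).trans_lt (h_radius x hx hx_mem)
  refine ⟨a + r, by positivity, C₀, h_cube.trans (halfOpenCube_mono (by simpa)), ?_, h_packing,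
    sub_le_inv_mul_log_div_pow hn_ne_zero ha hr har hn_large h_card⟩
  intro x hx hx_mem
  simpa only [avgSqRadius, centroid, Fintype.card_fin] using h_radius x hx hx_mem
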